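/- arXiv:1911.02653 — 3 statements merged into one kernel-verified Lean document; each statement's English description precedes it below -/
import Mathlib

section
/- Let α > 0 and assume M = max_{1 ≤ j ≤ N} M_j < ∞, where M_j is the α-branching number of (b̄^j, k̄^j, γ̄^j). Then liminf_{k→∞} (1/k) · log ( inf_{R∈𝓡(k)} Pr_{R,Γ}(S^{αk, k}) ) ≥ −M. -/
/-!
The probability of success is bounded below by an explicit subsolution of the one-step recursion,
so that neither a change of measure nor a concentration estimate is needed.

Write `u(l) = α κ(l) - μ(l)` for the slack of a word and, for `Λ > M`, put
`f(l) = exp (Λ (κ(l) - k)) · G(u(l))`, where `G(u) = 0` for `u < 0` and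
`G(u) = exp (-(η/2) max(0, C/η - u)²)` for `u ≥ 0`.  If every group `j` satisfies
`G(u) ≤ ∑ i, γ_i exp (Λ k_i) G(u + α k_i - b_i)` (`RB.eventually_step`), then
`P(l) f(l) ≤ ∑ a, P(l ++ [a]) f(l ++ [a])`.  Going down the tree of words (`RB.tree_lower`), this
gives `f(ε) ≤ Pr(S)`: a word with `κ = k` has `f ≤ 1`, with `f = 0` if its cost exceeds `α k`;
consistency of `R` rules out `κ > k`; and words longer than `α k` have `f = 0` since `b ≥ 1`.
As `f(ε) = exp (-Λ k) · G(0)` with `G(0) > 0` independent of `k`, the exponential rate is at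
least `-Λ`.

The one-step inequality comes from a near-optimal `q` of the branching problem and Jensen's
inequality for `exp`, which give a gain `σ = Λ (q·k̄) - D(q‖γ̄) > 0`.  The function `log G` is
concave and nondecreasing with second derivative at least `-η`; since `q` has nonnegative mean
slack, passing to `log G` loses at most `O(η)`, which `σ` absorbs.  This fails only near `u = 0`,
where a step may lead to `u < 0`.  There, if some letter has positive slack, the single term of
that letter suffices because `log G` has slope about `C`; if no letter has positive slack, then
`q` is supported on letters with zero slack, and Jensen's inequality still applies.
-/

open scoped Classical

noncomputable section

namespace RB

/-- The alphabet `𝒳`, given as the disjoint union of the groups `𝒳_j`. -/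
abbrev X (N : ℕ) (r : Fin N → ℕ) : Type := (j : Fin N) × Fin (r j)

variable {N : ℕ} {r : Fin N → ℕ}

/-- the coverage `κ` of a word (`K` is the concatenation of the `k̄ʲ`) -/
def kap (K : (j : Fin N) → Fin (r j) → ℕ) (l : List (X N r)) : ℕ :=
  (l.map fun a => K a.1 a.2).sum

/-- the cost `μ` of a word (`B` is the concatenation of the `b̄ʲ`) -/
def mu (B : (j : Fin N) → Fin (r j) → ℕ) (l : List (X N r)) : ℕ :=
  (l.map fun a => B a.1 a.2).sum

/-- `P_{R,Υ}(ā) = ∏_ℓ [Υ_{a_ℓ}` if `a_ℓ ∈ 𝒳_{R(a_1,…,a_{ℓ-1})}`, else `0]` -/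
def wordP (R : List (X N r) → Fin N) (Υ : (j : Fin N) → Fin (r j) → ℝ)
    (l : List (X N r)) : ℝ :=
  ∏ ℓ : Fin l.length,
    if (l.get ℓ).1 = R (l.take ℓ.1) then Υ (l.get ℓ).1 (l.get ℓ).2 else 0

/-- the set of words `A^{b,k}` -/
def ASet (B K : (j : Fin N) → Fin (r j) → ℕ) (bb kb : ℝ) : Set (List (X N r)) :=
  if bb < 0 then ∅
  else if kb ≤ 0 then {[]}
  else {l | l ≠ [] ∧ (mu B l : ℝ) ≤ bb ∧ kb ≤ (kap K l : ℝ) ∧ (kap K l.dropLast : ℝ) < kb}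

/-- `Pr_{R,Υ}(S^{b,k}) = Σ_{ā ∈ A^{b,k}} P_{R,Υ}(ā)` (the set `A^{b,k}` is finite,
so the `tsum` is the finite sum) -/
def PrS (B K : (j : Fin N) → Fin (r j) → ℕ) (R : List (X N r) → Fin N)
    (Υ : (j : Fin N) → Fin (r j) → ℝ) (bb kb : ℝ) : ℝ :=
  ∑' l : ASet B K bb kb, wordP R Υ l.1

/-- `k`-consistent rules mappings: whenever `κ(ā) < k`, every `i ∈ 𝒳_{R(ā)}`
satisfies `K_i ≤ k - κ(ā)`. -/
def Consistent (K : (j : Fin N) → Fin (r j) → ℕ) (k : ℕ)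
    (R : List (X N r) → Fin N) : Prop :=
  ∀ l : List (X N r), kap K l < k → ∀ i : Fin (r (R l)), K (R l) i + kap K l ≤ k

/-- Kullback-Leibler divergence -/
def KL {ρ : ℕ} (q g : Fin ρ → ℝ) : ℝ := ∑ i, q i * Real.log (q i / g i)

/-- the set of values of the `α`-branching optimization problem -/
def BrSet (α : ℝ) {ρ : ℕ} (bv kv : Fin ρ → ℕ) (g : Fin ρ → ℝ) : Set ℝ :=
  {x | ∃ q : Fin ρ → ℝ, (∀ i, 0 ≤ q i) ∧ (∑ i, q i = 1) ∧
        (∑ i, q i * (bv i : ℝ)) ≤ α * ∑ i, q i * (kv i : ℝ) ∧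
        x = KL q g / ∑ i, q i * (kv i : ℝ)}

end RB

namespace RB

/-! ### The slack function and the one-step inequality -/

/-- The logarithm of the slack function on `u ≥ 0`: a downward parabola with slope `C` at `0`,
replaced by the constant `0` to the right of its vertex `C / η`. -/
def logG (C η u : ℝ) : ℝ := -(η / 2) * (max 0 (C / η - u)) ^ 2

/-- The slack function `G`; it vanishes on negative slack. -/
def G (C η u : ℝ) : ℝ := if u < 0 then 0 else Real.exp (logG C η u)

lemma G_nonneg (C η u : ℝ) : 0 ≤ G C η u := by
  unfold G; split_ifs
  · exact le_rfl
  · positivity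

lemma G_le_one {C η : ℝ} (hη : 0 < η) (u : ℝ) : G C η u ≤ 1 := by
  unfold G; split_ifs
  · norm_num
  · rw [Real.exp_le_one_iff]
    have : 0 ≤ (η / 2) * (max 0 (C / η - u)) ^ 2 := by positivity
    unfold logG; linarith

/-- Second-order lower bound for the increments of `logG`. -/
lemma logG_add {C η : ℝ} (hη : 0 < η) (u d : ℝ) :
    logG C η u + η * max 0 (C / η - u) * d - η / 2 * d ^ 2 ≤ logG C η (u + d) := by
  unfold logG
  set v := C / η - u
  have e : C / η - (u + d) = v - d := by simp only [v]; ring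
  rw [e]
  have h : (max 0 (v - d)) ^ 2 ≤ (max 0 v - d) ^ 2 := by
    rcases le_total (v - d) 0 with h0 | h0
    · rw [max_eq_left h0]; nlinarith [sq_nonneg (max 0 v - d)]
    · rw [max_eq_right h0]
      have := le_max_right 0 v
      gcongr
  nlinarith [mul_le_mul_of_nonneg_left h (by positivity : (0 : ℝ) ≤ η / 2)]

/-- Gibbs' variational inequality: for weights `t` on the support of `q`,
`exp (q·t - D(q‖g)) ≤ ∑ g_i exp t_i`, where off the support the summands may be
replaced by anything nonnegative. -/
lemma gibbs {ρ : ℕ} {q g t s : Fin ρ → ℝ} (hq : ∀ i, 0 ≤ q i) (hq1 : ∑ i, q i = 1)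
    (hg : ∀ i, 0 < g i) (hs : ∀ i, 0 ≤ s i) (hts : ∀ i, 0 < q i → s i = Real.exp (t i)) :
    Real.exp (∑ i, q i * t i - KL q g) ≤ ∑ i, g i * s i := by
  have hJ := convexOn_exp.map_sum_le (t := Finset.univ) (w := q)
    (p := fun i => t i - Real.log (q i / g i)) (fun i _ => hq i) hq1 (fun _ _ => Set.mem_univ _)
  simp only [smul_eq_mul, mul_sub, Finset.sum_sub_distrib] at hJ
  refine hJ.trans (Finset.sum_le_sum fun i _ => ?_)
  rcases (hq i).eq_or_lt with h | h
  · rw [← h, zero_mul]; exact mul_nonneg (hg i).le (hs i)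
  · have hgi := hg i
    rw [hts i h, Real.exp_sub, Real.exp_log (by positivity)]
    apply le_of_eq; field_simp

/-- For a single group, the one-step inequality holds once `C` is large and then `η` is small. -/
lemma eventually_step {ρ : ℕ} (bv kv : Fin ρ → ℕ) (hb : ∀ i, 1 ≤ bv i)
    (g : Fin ρ → ℝ) (hg : ∀ i, 0 < g i) {α Λ x : ℝ} (hα : 0 < α)
    (hx : x ∈ BrSet α bv kv g) (hxΛ : x < Λ) :
    ∀ᶠ C in Filter.atTop, ∀ᶠ η in nhdsWithin (0 : ℝ) (Set.Ioi 0), ∀ u : ℝ,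
      G C η u ≤ ∑ i, g i * (Real.exp (Λ * kv i) * G C η (u + (α * kv i - bv i))) := by
  obtain ⟨q, hq, hq1, hqd, rfl⟩ := hx
  set d : Fin ρ → ℝ := fun i => α * kv i - bv i with hd
  have hqb : 1 ≤ ∑ i, q i * (bv i : ℝ) := by
    rw [← hq1]
    exact Finset.sum_le_sum fun i _ => le_mul_of_one_le_right (hq i) (by exact_mod_cast hb i)
  have hqk : 0 < ∑ i, q i * (kv i : ℝ) := by
    by_contra! h
    nlinarith
  have hqd' : 0 ≤ ∑ i, q i * d i := by
    have : ∑ i, q i * d i = α * ∑ i, q i * (kv i : ℝ) - ∑ i, q i * (bv i : ℝ) := by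
      rw [Finset.mul_sum, ← Finset.sum_sub_distrib]
      exact Finset.sum_congr rfl fun i _ => by simp only [hd]; ring
    linarith
  rw [div_lt_iff₀ hqk] at hxΛ
  obtain ⟨σ, hσ⟩ : ∃ σ, σ = Λ * ∑ i, q i * (kv i : ℝ) - KL q g := ⟨_, rfl⟩
  have hσ0 : 0 < σ := by rw [hσ]; linarith
  obtain ⟨D, hD0, hD⟩ : ∃ D : ℝ, 0 < D ∧ ∀ i, |d i| ≤ D :=
    ⟨∑ i, |d i| + 1, by positivity, fun i =>
      (Finset.single_le_sum (f := fun i => |d i|) (fun _ _ => abs_nonneg _)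
        (Finset.mem_univ i)).trans (by linarith)⟩
  have hD2 : ∀ i, d i ^ 2 ≤ D ^ 2 := fun i => sq_le_sq' (abs_le.1 (hD i)).1 (abs_le.1 (hD i)).2
  have hterm : ∀ (C η u : ℝ) i,
      0 ≤ Real.exp (Λ * kv i) * G C η (u + (α * kv i - bv i)) := fun C η u i =>
    mul_nonneg (Real.exp_pos _).le (G_nonneg _ _ _)
  -- Jensen's inequality, valid as long as the support of `q` does not lead to negative slack.
  have key : ∀ C η u : ℝ, 0 < η → η * D ^ 2 ≤ 2 * σ → 0 ≤ u →
      (∀ i, 0 < q i → 0 ≤ u + d i) →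
      G C η u ≤ ∑ i, g i * (Real.exp (Λ * kv i) * G C η (u + (α * kv i - bv i))) := by
    intro C η u hη hηD hu hsup
    refine le_trans ?_ (gibbs (t := fun i => Λ * kv i + logG C η (u + d i)) hq hq1 hg
      (hterm C η u) ?_)
    · rw [G, if_neg hu.not_gt, Real.exp_le_exp]
      set p := max 0 (C / η - u) with hp
      have hp0 : 0 ≤ p := le_max_left _ _
      have h1 : ∑ i, q i * (Λ * kv i + (logG C η u + η * p * d i - η / 2 * D ^ 2)) ≤
          ∑ i, q i * (Λ * kv i + logG C η (u + d i)) := by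
        refine Finset.sum_le_sum fun i _ => mul_le_mul_of_nonneg_left ?_ (hq i)
        have := logG_add (C := C) hη u (d i)
        have h2 := mul_le_mul_of_nonneg_left (hD2 i) (by positivity : (0 : ℝ) ≤ η / 2)
        linarith
      have h3 : ∑ i, q i * (Λ * kv i + (logG C η u + η * p * d i - η / 2 * D ^ 2)) =
          Λ * ∑ i, q i * (kv i : ℝ) + η * p * ∑ i, q i * d i +
            (logG C η u - η / 2 * D ^ 2) * ∑ i, q i := by
        simp only [Finset.mul_sum, ← Finset.sum_add_distrib]
        exact Finset.sum_congr rfl fun i _ => by ring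
      rw [hq1] at h3
      have h4 : 0 ≤ η * p * ∑ i, q i * d i := by positivity
      linarith
    · intro i hi
      have : u + (α * kv i - bv i) = u + d i := rfl
      rw [this, G, if_neg (hsup i hi).not_gt, Real.exp_add]
  have hneg : ∀ C η u : ℝ, u < 0 →
      G C η u ≤ ∑ i, g i * (Real.exp (Λ * kv i) * G C η (u + (α * kv i - bv i))) := by
    intro C η u hu
    rw [G, if_pos hu]
    exact Finset.sum_nonneg fun i _ => mul_nonneg (hg i).le (hterm C η u i)
  have hsmall : ∀ᶠ η in nhdsWithin (0 : ℝ) (Set.Ioi 0), 0 < η ∧ η ≤ 1 ∧ η * D ^ 2 ≤ 2 * σ := by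
    have h1 : Set.Ioc (0 : ℝ) (min 1 (2 * σ / D ^ 2)) ∈ nhdsWithin (0 : ℝ) (Set.Ioi 0) :=
      Ioc_mem_nhdsGT (by positivity)
    filter_upwards [h1] with η hη
    refine ⟨hη.1, hη.2.trans (min_le_left _ _), ?_⟩
    rw [← le_div_iff₀ (by positivity)]
    exact hη.2.trans (min_le_right _ _)
  by_cases hpos : ∃ i, 0 < d i
  · obtain ⟨i, hi⟩ := hpos
    filter_upwards [Filter.eventually_ge_atTop
      (D + (D ^ 2 - Real.log (g i) - Λ * kv i) / d i)] with C hC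
    filter_upwards [hsmall] with η ⟨hη, hη1, hηD⟩ u
    rcases lt_or_ge u 0 with hu | hu
    · exact hneg C η u hu
    rcases le_or_gt D u with hDu | hDu
    · exact key C η u hη hηD hu fun l _ => by linarith [(abs_le.1 (hD l)).1]
    · refine le_trans ?_ (Finset.single_le_sum
        (f := fun i => g i * (Real.exp (Λ * kv i) * G C η (u + (α * kv i - bv i))))
        (fun i _ => mul_nonneg (hg i).le (hterm C η u i)) (Finset.mem_univ i))
      have e : u + (α * kv i - bv i) = u + d i := rfl
      simp only [e]
      rw [G, G, if_neg hu.not_gt, if_neg (by linarith : ¬ (u + d i < 0))]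
      nth_rw 1 [← Real.exp_log (hg i)]
      rw [← Real.exp_add, ← Real.exp_add, Real.exp_le_exp]
      have h1 := logG_add (C := C) hη u (d i)
      have h2 : C - D ≤ η * max 0 (C / η - u) := by
        have h3 : η * (C / η - u) ≤ η * max 0 (C / η - u) :=
          mul_le_mul_of_nonneg_left (le_max_right _ _) hη.le
        have h4 : η * (C / η - u) = C - η * u := by field_simp
        nlinarith
      have h5 : D ^ 2 - Real.log (g i) - Λ * kv i ≤ (C - D) * d i := by
        rw [← div_le_iff₀ hi]; linarith
      have h6 := mul_le_mul_of_nonneg_right h2 hi.le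
      nlinarith [hD2 i, sq_nonneg (d i), sq_nonneg D]
  · push Not at hpos
    -- All slacks are nonpositive with nonnegative mean, hence vanish on the support of `q`.
    have hzero : ∀ i, 0 < q i → d i = 0 := by
      intro i hi
      have hle : ∀ l ∈ Finset.univ, q l * d l ≤ 0 := fun l _ =>
        mul_nonpos_of_nonneg_of_nonpos (hq l) (hpos l)
      have := (Finset.sum_eq_zero_iff_of_nonpos hle).1
        (le_antisymm (Finset.sum_nonpos hle) hqd') i (Finset.mem_univ i)
      exact (mul_eq_zero.1 this).resolve_left hi.ne'
    refine Filter.Eventually.of_forall fun C => ?_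
    filter_upwards [hsmall] with η ⟨hη, hη1, hηD⟩ u
    rcases lt_or_ge u 0 with hu | hu
    · exact hneg C η u hu
    · exact key C η u hη hηD hu fun l hl => by rw [hzero l hl]; linarith

/-! ### Words and the tree of prefixes -/

variable {N : ℕ} {r : Fin N → ℕ}

lemma wordP_append (R : List (X N r) → Fin N) (Υ : (j : Fin N) → Fin (r j) → ℝ)
    (l : List (X N r)) (a : X N r) :
    wordP R Υ (l ++ [a]) = wordP R Υ l * (if a.1 = R l then Υ a.1 a.2 else 0) := by
  unfold wordP
  have hlen : l.length + 1 = (l ++ [a]).length := by simp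
  rw [← Equiv.prod_comp (finCongr hlen), Fin.prod_univ_castSucc]
  congr 1
  · refine Finset.prod_congr rfl fun i _ => ?_
    have h1 : (l ++ [a]).get ((finCongr hlen) i.castSucc) = l.get i := by
      simp
    have h2 : (l ++ [a]).take ((finCongr hlen) i.castSucc).1 = l.take i.1 := by
      simp [List.take_append_of_le_length i.2.le]
    rw [h1, h2]
  · have h1 : (l ++ [a]).get ((finCongr hlen) (Fin.last _)) = a := by
      simp
    have h2 : (l ++ [a]).take ((finCongr hlen) (Fin.last _)).1 = l := by
      simp
    rw [h1, h2]

lemma wordP_nil (R : List (X N r) → Fin N) (Υ : (j : Fin N) → Fin (r j) → ℝ) :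
    wordP R Υ [] = 1 := by
  simp [wordP]

lemma wordP_nonneg (R : List (X N r) → Fin N) {Υ : (j : Fin N) → Fin (r j) → ℝ}
    (hΥ : ∀ j i, 0 < Υ j i) (l : List (X N r)) : 0 ≤ wordP R Υ l :=
  Finset.prod_nonneg fun _ _ => by split_ifs <;> [exact (hΥ _ _).le; exact le_rfl]

lemma kap_append (K : (j : Fin N) → Fin (r j) → ℕ) (l : List (X N r)) (a : X N r) :
    kap K (l ++ [a]) = kap K l + K a.1 a.2 := by
  simp [kap]

lemma mu_append (B : (j : Fin N) → Fin (r j) → ℕ) (l : List (X N r)) (a : X N r) :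
    mu B (l ++ [a]) = mu B l + B a.1 a.2 := by
  simp [mu]

lemma length_le_mu {B : (j : Fin N) → Fin (r j) → ℕ} (hB : ∀ j i, 1 ≤ B j i)
    (l : List (X N r)) : l.length ≤ mu B l := by
  induction l with
  | nil => simp
  | cons a l ih =>
    have := hB a.1 a.2
    simp only [mu, List.map_cons, List.sum_cons, List.length_cons] at ih ⊢
    omega

/-- Conditional expectation over the next letter: only the letters of the group `R l` count. -/
lemma sum_wordP_append (R : List (X N r) → Fin N) (Υ : (j : Fin N) → Fin (r j) → ℝ)
    (l : List (X N r)) (F : X N r → ℝ) :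
    ∑ a, wordP R Υ (l ++ [a]) * F a =
      wordP R Υ l * ∑ i, Υ (R l) i * F ⟨R l, i⟩ := by
  simp only [wordP_append, mul_assoc, ← Finset.mul_sum]
  congr 1
  rw [Fintype.sum_sigma, Finset.sum_eq_single (R l)]
  · simp
  · intro j _ hj
    simp [hj]
  · simp

/-- The words of `S` below distinct children of `l` are distinct words below `l`. -/
lemma sum_children_le (S : Finset (List (X N r))) {P : List (X N r) → ℝ} (hP : ∀ w, 0 ≤ P w)
    (l : List (X N r)) :
    ∑ a, ∑ w ∈ S with l ++ [a] <+: w, P w ≤ ∑ w ∈ S with l <+: w, P w := by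
  rw [← Finset.sum_biUnion]
  · refine Finset.sum_le_sum_of_subset_of_nonneg ?_ fun w _ _ => hP w
    intro w hw
    simp only [Finset.mem_biUnion, Finset.mem_filter, Finset.mem_univ, true_and] at hw ⊢
    obtain ⟨a, hS, ha⟩ := hw
    exact ⟨hS, (List.prefix_append l [a]).trans ha⟩
  · intro a _ a' _ hne
    refine Finset.disjoint_left.2 fun w hw hw' => hne ?_
    obtain ⟨t, ht⟩ := (Finset.mem_filter.1 hw).2
    obtain ⟨t', ht'⟩ := (Finset.mem_filter.1 hw').2
    rw [← ht'] at ht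
    simpa using (by simpa using ht : a = a' ∧ t = t').1

/-- A word below `l` is `l` itself or lies below a child of `l`. -/
lemma sum_le_children (S : Finset (List (X N r))) {P : List (X N r) → ℝ} (hP : ∀ w, 0 ≤ P w)
    (l : List (X N r)) :
    ∑ w ∈ S with l <+: w, P w ≤ P l + ∑ a, ∑ w ∈ S with l ++ [a] <+: w, P w := by
  have hsub : (S.filter fun w => l <+: w) ⊆
      {l} ∪ Finset.univ.biUnion fun a => S.filter fun w => l ++ [a] <+: w := by
    intro w hw
    obtain ⟨hS, t, rfl⟩ := Finset.mem_filter.1 hw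
    cases t with
    | nil => simp
    | cons a t =>
      refine Finset.mem_union_right _ (Finset.mem_biUnion.2 ⟨a, Finset.mem_univ _, ?_⟩)
      exact Finset.mem_filter.2 ⟨hS, t, by simp⟩
  refine (Finset.sum_le_sum_of_subset_of_nonneg hsub fun w _ _ => hP w).trans ?_
  refine (le_add_of_nonneg_right (Finset.sum_nonneg fun w _ => hP w)).trans
    (Finset.sum_union_inter).le |>.trans ?_
  rw [Finset.sum_singleton, add_le_add_iff_left, Finset.sum_biUnion]
  intro a _ a' _ hne
  refine Finset.disjoint_left.2 fun w hw hw' => hne ?_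
  obtain ⟨t, ht⟩ := (Finset.mem_filter.1 hw).2
  obtain ⟨t', ht'⟩ := (Finset.mem_filter.1 hw').2
  rw [← ht'] at ht
  exact (by simpa using ht : a = a' ∧ t = t').1

/-- Words of each fixed length have total probability one, so finitely many words of length at
most `n` have total probability at most `n + 1`; here for words below `l`. -/
lemma tree_upper (R : List (X N r) → Fin N) {Υ : (j : Fin N) → Fin (r j) → ℝ}
    (hΥ : ∀ j i, 0 < Υ j i) (hΥ1 : ∀ j, ∑ i, Υ j i = 1) (S : Finset (List (X N r))) (n : ℕ) :
    ∀ l : List (X N r), (∀ w ∈ S, w.length ≤ l.length + n) →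
      ∑ w ∈ S with l <+: w, wordP R Υ w ≤ (n + 1) * wordP R Υ l := by
  induction n with
  | zero =>
    intro l hS
    have : (S.filter fun w => l <+: w) ⊆ {l} := by
      intro w hw
      obtain ⟨hw, hp⟩ := Finset.mem_filter.1 hw
      exact Finset.mem_singleton.2 (hp.eq_of_length_le (hS w hw)).symm
    refine (Finset.sum_le_sum_of_subset_of_nonneg this
      fun w _ _ => wordP_nonneg R hΥ w).trans ?_
    simp
  | succ n ih =>
    intro l hS
    refine (sum_le_children S (wordP_nonneg R hΥ) l).trans ?_
    have h1 : ∑ a, ∑ w ∈ S with l ++ [a] <+: w, wordP R Υ w ≤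
        ∑ a, wordP R Υ (l ++ [a]) * ((n : ℝ) + 1) := by
      refine Finset.sum_le_sum fun a _ => ?_
      rw [mul_comm]
      refine ih (l ++ [a]) fun w hw => (hS w hw).trans ?_
      simp; omega
    rw [sum_wordP_append, ← Finset.sum_mul, hΥ1] at h1
    push_cast
    linarith

/-! ### Bounds on the success probability -/

section Bounds

variable {B K : (j : Fin N) → Fin (r j) → ℕ}

lemma mem_ASet {α : ℝ} (hα : 0 < α) {k : ℕ} (hk : 0 < k) (l : List (X N r)) :
    l ∈ ASet B K (α * k) k ↔
      l ≠ [] ∧ (mu B l : ℝ) ≤ α * k ∧ k ≤ kap K l ∧ kap K l.dropLast < k := by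
  have hk' : (0 : ℝ) < k := by exact_mod_cast hk
  unfold ASet
  rw [if_neg (by positivity : (0 : ℝ) ≤ α * k).not_gt, if_neg hk'.not_ge]
  simp

lemma length_le_of_mem (hB : ∀ j i, 1 ≤ B j i) {α : ℝ} (hα : 0 < α) {k : ℕ} (hk : 0 < k)
    {l : List (X N r)} (hl : l ∈ ASet B K (α * k) k) : l.length ≤ ⌊α * k⌋₊ := by
  refine Nat.le_floor (le_trans ?_ ((mem_ASet hα hk l).1 hl).2.1)
  exact_mod_cast length_le_mu hB l

lemma ASet_finite (hB : ∀ j i, 1 ≤ B j i) {α : ℝ} (hα : 0 < α) {k : ℕ} (hk : 0 < k) :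
    (ASet B K (α * k) k).Finite :=
  (List.finite_length_le (X N r) ⌊α * k⌋₊).subset fun _ hl => length_le_of_mem hB hα hk hl

lemma PrS_eq_sum (hB : ∀ j i, 1 ≤ B j i) {α : ℝ} (hα : 0 < α) {k : ℕ} (hk : 0 < k)
    (R : List (X N r) → Fin N) (Υ : (j : Fin N) → Fin (r j) → ℝ) :
    PrS B K R Υ (α * k) k =
      ∑ w ∈ (ASet_finite (K := K) hB hα hk).toFinset with [] <+: w, wordP R Υ w := by
  have : (ASet_finite (K := K) hB hα hk).toFinset.filter (fun w => [] <+: w) =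
      (ASet_finite (K := K) hB hα hk).toFinset := by
    simp
  have h := Finset.tsum_subtype' (ASet_finite (K := K) hB hα hk).toFinset (wordP R Υ)
  rw [Set.Finite.coe_toFinset] at h
  rw [this, PrS, h]

lemma PrS_le (hB : ∀ j i, 1 ≤ B j i) {α : ℝ} (hα : 0 < α) {k : ℕ} (hk : 0 < k)
    (R : List (X N r) → Fin N) {Υ : (j : Fin N) → Fin (r j) → ℝ}
    (hΥ : ∀ j i, 0 < Υ j i) (hΥ1 : ∀ j, ∑ i, Υ j i = 1) :
    PrS B K R Υ (α * k) k ≤ α * k + 1 := by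
  rw [PrS_eq_sum hB hα hk]
  refine (tree_upper R hΥ hΥ1 _ ⌊α * k⌋₊ [] fun w hw => ?_).trans ?_
  · simpa using length_le_of_mem hB hα hk ((Set.Finite.mem_toFinset _).1 hw)
  · rw [wordP_nil, mul_one]
    gcongr
    exact Nat.floor_le (by positivity)

/-- Descent along the tree: a subsolution of the one-step recursion bounds the success
probability from below. The induction is on `n`, a bound for the number of letters that can
still be added before the cost exceeds `α k`. -/
lemma tree_lower (hB : ∀ j i, 1 ≤ B j i) {α Λ C η : ℝ} (hα : 0 < α) (hη : 0 < η)
    {k : ℕ} (hk : 0 < k) (R : List (X N r) → Fin N) (hR : Consistent K k R)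
    {Υ : (j : Fin N) → Fin (r j) → ℝ} (hΥ : ∀ j i, 0 < Υ j i)
    (hstep : ∀ j u, G C η u ≤
      ∑ i, Υ j i * (Real.exp (Λ * K j i) * G C η (u + (α * K j i - B j i)))) (n : ℕ) :
    ∀ l : List (X N r), kap K l < k → α * k < l.length + n →
      wordP R Υ l * (Real.exp (Λ * (kap K l - k)) * G C η (α * kap K l - mu B l)) ≤
        ∑ w ∈ (ASet_finite (K := K) hB hα hk).toFinset with l <+: w, wordP R Υ w := by
  have hP := wordP_nonneg R hΥ
  induction n with
  | zero =>
    intro l hl hn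
    have hlt : α * kap K l - mu B l < 0 := by
      have h1 : (l.length : ℝ) ≤ mu B l := by exact_mod_cast length_le_mu hB l
      have h2 : (kap K l : ℝ) < k := by exact_mod_cast hl
      push_cast at hn
      nlinarith
    rw [G, if_pos hlt, mul_zero, mul_zero]
    exact Finset.sum_nonneg fun w _ => hP w
  | succ n ih =>
    intro l hl hn
    refine le_trans ?_ (sum_children_le _ hP l)
    set f : List (X N r) → ℝ := fun l =>
      Real.exp (Λ * (kap K l - k)) * G C η (α * kap K l - mu B l) with hf
    have h1 : wordP R Υ l * f l ≤ ∑ a, wordP R Υ (l ++ [a]) * f (l ++ [a]) := by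
      rw [sum_wordP_append]
      refine mul_le_mul_of_nonneg_left ?_ (hP l)
      have h2 := mul_le_mul_of_nonneg_left (hstep (R l) (α * kap K l - mu B l))
        (Real.exp_pos (Λ * (kap K l - k))).le
      refine h2.trans (le_of_eq ?_)
      rw [Finset.mul_sum]
      refine Finset.sum_congr rfl fun i _ => ?_
      simp only [hf, kap_append, mu_append]
      have e1 : Λ * (((kap K l + K (R l) i : ℕ) : ℝ) - k) =
          Λ * (kap K l - k) + Λ * K (R l) i := by push_cast; ring
      have e2 : α * ((kap K l + K (R l) i : ℕ) : ℝ) - ((mu B l + B (R l) i : ℕ) : ℝ) =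
          α * kap K l - mu B l + (α * K (R l) i - B (R l) i) := by push_cast; ring
      rw [e1, e2, Real.exp_add]
      ring
    refine h1.trans (Finset.sum_le_sum fun a _ => ?_)
    rcases lt_or_ge (kap K (l ++ [a])) k with hlt | hge
    · refine ih (l ++ [a]) hlt ?_
      simp only [List.length_append, List.length_singleton]
      push_cast at hn ⊢
      linarith
    by_cases ha : a.1 = R l
    · -- Consistency: the target coverage is hit exactly.
      have heq : kap K (l ++ [a]) = k := by
        refine le_antisymm ?_ hge
        have h3 : ∀ i : Fin (r a.1), K a.1 i + kap K l ≤ k := by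
          rw [ha]; exact hR l hl
        rw [kap_append, add_comm]
        exact h3 a.2
      rcases lt_or_ge (α * kap K (l ++ [a]) - mu B (l ++ [a])) 0 with hu | hu
      · simp only [hf]
        rw [G, if_pos hu, mul_zero, mul_zero]
        exact Finset.sum_nonneg fun w _ => hP w
      · have hmem : l ++ [a] ∈ (ASet_finite (K := K) hB hα hk).toFinset := by
          rw [Set.Finite.mem_toFinset, mem_ASet hα hk]
          refine ⟨by simp, ?_, hge, by simpa using hl⟩
          rw [heq] at hu
          linarith
        have hf1 : f (l ++ [a]) ≤ 1 := by
          simp only [hf, heq, sub_self, mul_zero, Real.exp_zero, one_mul]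
          exact G_le_one hη _
        refine (mul_le_of_le_one_right (hP _) hf1).trans ?_
        exact Finset.single_le_sum (f := wordP R Υ) (fun w _ => hP w)
          (Finset.mem_filter.2 ⟨hmem, List.prefix_rfl⟩)
    · rw [wordP_append, if_neg ha, mul_zero, zero_mul]
      exact Finset.sum_nonneg fun w _ => hP w

lemma le_PrS (hB : ∀ j i, 1 ≤ B j i) {α Λ C η : ℝ} (hα : 0 < α) (hη : 0 < η)
    {k : ℕ} (hk : 0 < k) (R : List (X N r) → Fin N) (hR : Consistent K k R)
    {Υ : (j : Fin N) → Fin (r j) → ℝ} (hΥ : ∀ j i, 0 < Υ j i)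
    (hstep : ∀ j u, G C η u ≤
      ∑ i, Υ j i * (Real.exp (Λ * K j i) * G C η (u + (α * K j i - B j i)))) :
    Real.exp (-(Λ * k) + logG C η 0) ≤ PrS B K R Υ (α * k) k := by
  rw [PrS_eq_sum hB hα hk]
  have := tree_lower hB hα hη hk R hR hΥ hstep (⌊α * k⌋₊ + 1) [] (by simpa [kap] using hk)
    (by simpa using Nat.lt_floor_add_one (α * k))
  refine le_trans (le_of_eq ?_) this
  simp [wordP_nil, kap, mu, G, Real.exp_add]

end Bounds

end RB

/-- Lemma 10, `strong_lower_bound`: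
`liminf_{k→∞} (1/k) log (inf_{R∈𝓡(k)} Pr_{R,Γ}(S^{αk,k})) ≥ -M`, where
`M = ⨆ j, M_j` is the largest `α`-branching number (finite by `hfeas`). -/
theorem stmt_11
    (N : ℕ) (hN : 1 ≤ N) (r : Fin N → ℕ) (hr : ∀ j, 1 ≤ r j)
    (bb kb : (j : Fin N) → Fin (r j) → ℕ)
    (hbb : ∀ j i, 1 ≤ bb j i)
    (γ : (j : Fin N) → Fin (r j) → ℝ)
    (hγpos : ∀ j i, 0 < γ j i) (hγsum : ∀ j, ∑ i, γ j i = 1)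
    (hks : ∃ j, ∀ i, kb j i ≤ 1)
    (α : ℝ) (hα : 0 < α)
    (hfeas : ∀ j, (RB.BrSet α (bb j) (kb j) (γ j)).Nonempty) :
    -(⨆ j, sInf (RB.BrSet α (bb j) (kb j) (γ j))) ≤
      Filter.liminf (fun k : ℕ =>
          Real.log (sInf {x | ∃ R : List (RB.X N r) → Fin N,
              RB.Consistent kb k R ∧
              x = RB.PrS bb kb R γ (α * (k : ℝ)) (k : ℝ)}) / (k : ℝ))
        Filter.atTop := by
  set F : ℕ → ℝ := fun k => sInf {x | ∃ R : List (RB.X N r) → Fin N,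
    RB.Consistent kb k R ∧ x = RB.PrS bb kb R γ (α * (k : ℝ)) (k : ℝ)} with hF
  obtain ⟨j₀, hj₀⟩ := hks
  -- Letters of coverage at most one never overshoot, so some consistent mapping exists.
  have hcons : ∀ k, RB.Consistent kb k (fun _ : List (RB.X N r) => j₀) := by
    intro k l hl i
    have := hj₀ i
    change kb j₀ i + _ ≤ _
    omega
  have hM : ∀ j, sInf (RB.BrSet α (bb j) (kb j) (γ j)) ≤
      ⨆ j, sInf (RB.BrSet α (bb j) (kb j) (γ j)) := fun j =>
    le_ciSup (f := fun j => sInf (RB.BrSet α (bb j) (kb j) (γ j)))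
      (Set.finite_range _).bddAbove j
  set M := ⨆ j, sInf (RB.BrSet α (bb j) (kb j) (γ j)) with hMdef
  have hlower : ∀ Λ, M < Λ → ∃ c : ℝ, ∀ k : ℕ, 0 < k → Real.exp (-(Λ * k) + c) ≤ F k := by
    intro Λ hΛ
    have hev : ∀ᶠ C in Filter.atTop, ∀ᶠ η in nhdsWithin (0 : ℝ) (Set.Ioi 0), ∀ j, ∀ u : ℝ,
        RB.G C η u ≤ ∑ i, γ j i *
          (Real.exp (Λ * kb j i) * RB.G C η (u + (α * kb j i - bb j i))) := by
      simp only [Filter.eventually_all]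
      intro j
      obtain ⟨x, hx, hxΛ⟩ := exists_lt_of_csInf_lt (hfeas j) ((hM j).trans_lt hΛ)
      exact RB.eventually_step (bb j) (kb j) (hbb j) (γ j) (hγpos j) hα hx hxΛ
    obtain ⟨C, hC⟩ := hev.exists
    obtain ⟨η, hstep, hη⟩ := (hC.and self_mem_nhdsWithin).exists
    refine ⟨RB.logG C η 0, fun k hk => le_csInf ⟨_, _, hcons k, rfl⟩ ?_⟩
    rintro x ⟨R, hR, rfl⟩
    exact RB.le_PrS hbb hα hη hk R hR hγpos hstep
  have hupper : ∀ k : ℕ, 0 < k → F k ≤ α * k + 1 := by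
    intro k hk
    refine le_trans (csInf_le ?_ ⟨_, hcons k, rfl⟩) (RB.PrS_le hbb hα hk _ hγpos hγsum)
    refine ⟨0, ?_⟩
    rintro x ⟨R, -, rfl⟩
    exact tsum_nonneg fun w => RB.wordP_nonneg R hγpos w.1
  -- In `ℝ` the `liminf` is meaningful only if the sequence is bounded above.
  have hcob : Filter.IsCoboundedUnder (· ≥ ·) Filter.atTop
      (fun k : ℕ => Real.log (F k) / (k : ℝ)) := by
    refine Filter.IsBoundedUnder.isCoboundedUnder_ge ⟨α, ?_⟩
    rw [Filter.eventually_map]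
    filter_upwards [Filter.eventually_gt_atTop 0] with k hk
    obtain ⟨c, hc⟩ := hlower (M + 1) (by linarith)
    have hpos : 0 < F k := (Real.exp_pos _).trans_le (hc k hk)
    have hk' : (0 : ℝ) < k := by exact_mod_cast hk
    rw [div_le_iff₀ hk']
    linarith [Real.log_le_sub_one_of_pos hpos, hupper k hk]
  refine le_of_forall_pos_le_add fun ε hε => ?_
  rw [← sub_le_iff_le_add]
  obtain ⟨c, hc⟩ := hlower (M + ε / 2) (by linarith)
  refine Filter.le_liminf_of_le hcob ?_
  have hlim : Filter.Tendsto (fun k : ℕ => c / (k : ℝ)) Filter.atTop (nhds 0) :=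
    tendsto_const_div_atTop_nhds_zero_nat c
  filter_upwards [Filter.eventually_gt_atTop 0,
    hlim.eventually (lt_mem_nhds (by linarith : -(ε / 2) < 0))] with k hk hck
  have hk' : (0 : ℝ) < k := by exact_mod_cast hk
  have h1 : -((M + ε / 2) * k) + c ≤ Real.log (F k) := by
    rw [Real.le_log_iff_exp_le ((Real.exp_pos _).trans_le (hc k hk))]
    exact hc k hk
  rw [lt_div_iff₀ hk'] at hck
  rw [le_div_iff₀ hk']
  linarith
end
end

section
/- For every k ∈ ℤ, ν ∈ ℤ and every rules mapping R ∈ 𝓡: Σ_{ā ∈ M^{ν,k}} P_{R,Q}(ā) ≥ (Q_min)^{max(ν, 0)}. -/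
/-!
A word of `M^{ν,k}` is generated letter by letter, the group of each letter being dictated by `R`.
If the prescribed group lies in `𝒩`, only the letter `d_j` is admissible; it has probability at
least `Q_min` and costs at least one unit of the budget `ν`, because `α·K_{d_j} > B_{d_j} > 0`.
If it lies outside `𝒩`, every letter of the support is admissible, these letters have total
probability `1`, and the budget `ν` is untouched.  So at most `ν` factors `Q_min` are lost.

Formally this is an induction on the coverage budget `k`.  `mem_MSet_iff` splits a word of
`M^{ν,k}` into an admissible first letter `a` and a word of `M^{ν',k'}` with the budgets reduced
by the cost of `a`, and `wordP_cons` factors the probability accordingly, with the rules mapping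
`R(a, ·)` on the tail.  The induction terminates because admissible letters have positive coverage:
outside `𝒩` the constraint `q̄·b̄ ≤ α(q̄·k̄)` forces `α·K_i = B_i > 0` on the support
(`coverage_pos`).
-/

open scoped Classical

noncomputable section

namespace RB

variable {N : ℕ} {r : Fin N → ℕ}

/-- `j ∈ 𝒩`: the group `j` is non-strict, i.e. there is `i ∈ 𝒳_j` with
`Q_i > 0` and `α·K_i > B_i`. -/
def inN (α : ℝ) (B K : (j : Fin N) → Fin (r j) → ℕ)
    (q : (j : Fin N) → Fin (r j) → ℝ) (j : Fin N) : Prop :=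
  ∃ i, 0 < q j i ∧ (B j i : ℝ) < α * (K j i : ℝ)

/-- the subword `𝒩(ā)` of the entries lying in `⋃_{j∈𝒩} 𝒳_j` -/
def Nsub (α : ℝ) (B K : (j : Fin N) → Fin (r j) → ℕ)
    (q : (j : Fin N) → Fin (r j) → ℝ) (l : List (X N r)) : List (X N r) :=
  l.filter fun a => decide (inN α B K q a.1)

/-- the set of words `M^{ν,k}` -/
def MSet (α : ℝ) (B K : (j : Fin N) → Fin (r j) → ℕ)
    (q : (j : Fin N) → Fin (r j) → ℝ) (d : (j : Fin N) → Fin (r j))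
    (ν k : ℤ) : Set (List (X N r)) :=
  if ν ≤ 0 ∨ k ≤ 0 then {[]}
  else
    {l | l ≠ [] ∧ (∀ a ∈ l, 0 < q a.1 a.2) ∧
      (∀ a ∈ l, inN α B K q a.1 → a.2 = d a.1) ∧
      (kap K l.dropLast : ℤ) < k ∧
      (kap K (Nsub α B K q l.dropLast) : ℤ) < ν ∧
      (k ≤ (kap K l : ℤ) ∨ ν ≤ (kap K (Nsub α B K q l) : ℤ))}

end RB

namespace RB

variable {N : ℕ} {r : Fin N → ℕ}

lemma wordP_cons (R : List (X N r) → Fin N) (Υ : (j : Fin N) → Fin (r j) → ℝ)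
    (a : X N r) (l : List (X N r)) :
    wordP R Υ (a :: l) =
      (if a.1 = R [] then Υ a.1 a.2 else 0) * wordP (fun w => R (a :: w)) Υ l := by
  unfold wordP
  exact Fin.prod_univ_succ (n := l.length) _

/-- The letters that may occur in a word of `M^{ν,k}`. -/
def Allowed (α : ℝ) (B K : (j : Fin N) → Fin (r j) → ℕ)
    (q : (j : Fin N) → Fin (r j) → ℝ) (d : (j : Fin N) → Fin (r j)) (a : X N r) : Prop :=
  0 < q a.1 a.2 ∧ (inN α B K q a.1 → a.2 = d a.1)

/-- The amount by which the letter `a` reduces the budget `ν`. -/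
def costN (α : ℝ) (B K : (j : Fin N) → Fin (r j) → ℕ)
    (q : (j : Fin N) → Fin (r j) → ℝ) (a : X N r) : ℕ :=
  if inN α B K q a.1 then K a.1 a.2 else 0

lemma kap_cons (K : (j : Fin N) → Fin (r j) → ℕ) (a : X N r) (l : List (X N r)) :
    kap K (a :: l) = K a.1 a.2 + kap K l := by
  simp [kap]

lemma kap_Nsub_cons (α : ℝ) (B K : (j : Fin N) → Fin (r j) → ℕ)
    (q : (j : Fin N) → Fin (r j) → ℝ) (a : X N r) (l : List (X N r)) :
    kap K (Nsub α B K q (a :: l)) = costN α B K q a + kap K (Nsub α B K q l) := by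
  by_cases h : inN α B K q a.1 <;> simp [Nsub, costN, kap, h]

/-- First-letter decomposition of `M^{ν,k}` for positive budgets. -/
lemma mem_MSet_iff (α : ℝ) (B K : (j : Fin N) → Fin (r j) → ℕ)
    (q : (j : Fin N) → Fin (r j) → ℝ) (d : (j : Fin N) → Fin (r j)) {ν k : ℤ}
    (hν : 0 < ν) (hk : 0 < k) (l : List (X N r)) :
    l ∈ MSet α B K q d ν k ↔ ∃ a t, a :: t = l ∧ Allowed α B K q d a ∧
      t ∈ MSet α B K q d (ν - costN α B K q a) (k - K a.1 a.2) := by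
  rw [MSet, if_neg (by omega)]
  cases l with
  | nil => simp
  | cons a t =>
    have hR : (∃ a' t', a' :: t' = a :: t ∧ Allowed α B K q d a' ∧
        t' ∈ MSet α B K q d (ν - costN α B K q a') (k - K a'.1 a'.2)) ↔
        (Allowed α B K q d a ∧
          t ∈ MSet α B K q d (ν - costN α B K q a) (k - K a.1 a.2)) := by
      constructor
      · rintro ⟨a', t', h, h'⟩
        obtain ⟨rfl, rfl⟩ := List.cons.inj h
        exact h'
      · exact fun h => ⟨a, t, rfl, h⟩
    rw [hR, MSet]
    cases t with
    | nil =>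
      have h1 : kap K ([] : List (X N r)) = 0 := rfl
      have h2 : kap K (Nsub α B K q ([] : List (X N r))) = 0 := rfl
      split_ifs with h
      · simp only [Set.mem_ofPred_eq, Allowed, kap_cons, kap_Nsub_cons, h1, h2,
          List.dropLast_singleton, List.forall_mem_singleton, Set.mem_singleton_iff]
        constructor
        · rintro ⟨-, h3, h4, -⟩
          exact ⟨⟨h3, h4⟩, trivial⟩
        · rintro ⟨⟨h3, h4⟩, -⟩
          exact ⟨by simp, h3, h4, by simpa using hk, by simpa using hν, by omega⟩
      · simp only [Set.mem_ofPred_eq, Allowed, kap_cons, kap_Nsub_cons, h1, h2,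
          List.dropLast_singleton, List.forall_mem_singleton]
        constructor
        · rintro ⟨-, -, -, -, -, h3⟩
          omega
        · rintro ⟨-, h3, -⟩
          exact absurd rfl h3
    | cons b u =>
      split_ifs with h
      · simp only [Set.mem_ofPred_eq, List.dropLast_cons_cons, kap_cons, kap_Nsub_cons,
          Set.mem_singleton_iff]
        constructor
        · rintro ⟨-, -, -, h3, h4, -⟩
          omega
        · rintro ⟨-, h3⟩
          exact absurd h3 (by simp)
      · simp only [Set.mem_ofPred_eq, Allowed]
        rw [List.dropLast_cons_cons (x := a), kap_cons K a, kap_cons K a,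
          kap_Nsub_cons α B K q a, kap_Nsub_cons α B K q a,
          List.forall_mem_cons (a := a) (p := fun c => 0 < q c.1 c.2),
          List.forall_mem_cons (a := a) (p := fun c => inN α B K q c.1 → c.2 = d c.1)]
        constructor
        · rintro ⟨-, ⟨h1, h2⟩, ⟨h3, h4⟩, h5, h6, h7⟩
          exact ⟨⟨h1, h3⟩, by simp, h2, h4, by omega, by omega, by omega⟩
        · rintro ⟨⟨h1, h3⟩, -, h2, h4, h5, h6, h7⟩
          exact ⟨by simp, ⟨h1, h2⟩, ⟨h3, h4⟩, by omega, by omega, by omega⟩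

/-- The one-step estimate: averaging the powers of `Q_min` left after the first letter, over the
admissible letters of the prescribed group `j`, costs nothing. -/
lemma one_step (α : ℝ) (B K : (j : Fin N) → Fin (r j) → ℕ)
    (q : (j : Fin N) → Fin (r j) → ℝ) (d : (j : Fin N) → Fin (r j)) (Qmin : ℝ)
    (hnn : ∀ j i, 0 ≤ q j i) (hsum : ∀ j, ∑ i, q j i = 1)
    (h0 : 0 < Qmin) (h1 : Qmin ≤ 1) (hmin : ∀ j i, 0 < q j i → Qmin ≤ q j i)
    (hd : ∀ j, 0 < q j (d j))
    (hK : ∀ a, Allowed α B K q d a → 1 ≤ K a.1 a.2) {ν : ℤ} (hν : 0 < ν) (j : Fin N) :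
    Qmin ^ ν.toNat ≤ ∑ a with Allowed α B K q d a,
      (if a.1 = j then q a.1 a.2 else 0) * Qmin ^ (ν - costN α B K q a).toNat := by
  have hnonneg : ∀ a : X N r,
      0 ≤ (if a.1 = j then q a.1 a.2 else 0) * Qmin ^ (ν - costN α B K q a).toNat := by
    intro a
    have := hnn a.1 a.2
    split_ifs <;> positivity
  by_cases hj : inN α B K q j
  · have hal : Allowed α B K q d ⟨j, d j⟩ := ⟨hd j, fun _ => rfl⟩
    refine le_trans ?_ (Finset.single_le_sum (fun a _ => hnonneg a)
      (Finset.mem_filter.2 ⟨Finset.mem_univ (⟨j, d j⟩ : X N r), hal⟩))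
    have hc := hK _ hal
    have hcost : costN α B K q ⟨j, d j⟩ = K j (d j) := if_pos hj
    rw [if_pos rfl, hcost]
    calc Qmin ^ ν.toNat = Qmin * Qmin ^ (ν.toNat - 1) := by
          rw [← pow_succ', Nat.sub_add_cancel (by omega)]
      _ ≤ q j (d j) * Qmin ^ (ν - K j (d j)).toNat :=
          mul_le_mul (hmin _ _ (hd j)) (pow_le_pow_of_le_one h0.le h1 (by dsimp at hc; omega))
            (by positivity) (hnn _ _)
  · calc Qmin ^ ν.toNat = ∑ i with 0 < q j i, q j i * Qmin ^ ν.toNat := by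
          rw [← Finset.sum_mul, Finset.sum_filter_of_ne, hsum, one_mul]
          intro i _ hi
          exact lt_of_le_of_ne (hnn j i) (Ne.symm hi)
      _ = ∑ a ∈ (Finset.univ.filter fun i => 0 < q j i).map
            (Function.Embedding.sigmaMk j),
            (if a.1 = j then q a.1 a.2 else 0) * Qmin ^ (ν - costN α B K q a).toNat := by
          rw [Finset.sum_map]
          refine Finset.sum_congr rfl fun i _ => ?_
          have hcost : costN α B K q ⟨j, i⟩ = 0 := if_neg hj
          change _ = (if j = j then q j i else 0) * Qmin ^ (ν - costN α B K q ⟨j, i⟩).toNat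
          rw [if_pos rfl, hcost, Nat.cast_zero, sub_zero]
      _ ≤ _ := by
          refine Finset.sum_le_sum_of_subset_of_nonneg ?_ fun a _ _ => hnonneg a
          intro a ha
          obtain ⟨i, hi, rfl⟩ := Finset.mem_map.1 ha
          exact Finset.mem_filter.2
            ⟨Finset.mem_univ _, (Finset.mem_filter.1 hi).2, fun h => absurd h hj⟩

/-- The lower bound, together with the finiteness of `M^{ν,k}`; finiteness is what makes the
`tsum` over `M^{ν,k}` an actual sum. -/
lemma exists_finset (α : ℝ) (B K : (j : Fin N) → Fin (r j) → ℕ)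
    (q : (j : Fin N) → Fin (r j) → ℝ) (d : (j : Fin N) → Fin (r j)) (Qmin : ℝ)
    (hnn : ∀ j i, 0 ≤ q j i) (hsum : ∀ j, ∑ i, q j i = 1)
    (h0 : 0 < Qmin) (h1 : Qmin ≤ 1) (hmin : ∀ j i, 0 < q j i → Qmin ≤ q j i)
    (hd : ∀ j, 0 < q j (d j))
    (hK : ∀ a, Allowed α B K q d a → 1 ≤ K a.1 a.2) (n : ℕ) :
    ∀ (ν k : ℤ) (R : List (X N r) → Fin N), k ≤ n →
      ∃ F : Finset (List (X N r)), (F : Set (List (X N r))) = MSet α B K q d ν k ∧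
        Qmin ^ ν.toNat ≤ ∑ l ∈ F, wordP R q l := by
  have base : ∀ (ν k : ℤ) (R : List (X N r) → Fin N), (ν ≤ 0 ∨ k ≤ 0) →
      ∃ F : Finset (List (X N r)), (F : Set (List (X N r))) = MSet α B K q d ν k ∧
        Qmin ^ ν.toNat ≤ ∑ l ∈ F, wordP R q l := by
    intro ν k R h
    refine ⟨{[]}, by simp [MSet, h], ?_⟩
    simpa [wordP] using pow_le_one₀ h0.le h1
  induction n with
  | zero => exact fun ν k R hk => base ν k R (Or.inr (by simpa using hk))
  | succ n ih =>
    intro ν k R hkn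
    by_cases hνk : ν ≤ 0 ∨ k ≤ 0
    · exact base ν k R hνk
    have hν : 0 < ν := by omega
    have hk : 0 < k := by omega
    have step : ∀ a : X N r, ∃ F : Finset (List (X N r)), Allowed α B K q d a →
        (F : Set (List (X N r))) =
          MSet α B K q d (ν - costN α B K q a) (k - K a.1 a.2) ∧
        Qmin ^ (ν - costN α B K q a).toNat ≤ ∑ l ∈ F, wordP (fun w => R (a :: w)) q l := by
      intro a
      by_cases ha : Allowed α B K q d a
      · have := hK a ha
        obtain ⟨F, hF⟩ := ih (ν - costN α B K q a) (k - K a.1 a.2) (fun w => R (a :: w))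
          (by push_cast at hkn; omega)
        exact ⟨F, fun _ => hF⟩
      · exact ⟨∅, fun h => absurd h ha⟩
    choose F hF using step
    refine ⟨((Finset.univ.filter (Allowed α B K q d)).sigma F).image fun p => p.1 :: p.2,
      ?_, ?_⟩
    · ext l
      rw [mem_MSet_iff α B K q d hν hk]
      simp only [Finset.coe_image, Set.mem_image, Finset.mem_coe, Finset.mem_sigma,
        Finset.mem_filter, Finset.mem_univ, true_and]
      constructor
      · rintro ⟨⟨a, t⟩, ⟨ha, ht⟩, hl⟩
        exact ⟨a, t, hl, ha, (hF a ha).1 ▸ ht⟩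
      · rintro ⟨a, t, hl, ha, ht⟩
        rw [← (hF a ha).1] at ht
        exact ⟨⟨a, t⟩, ⟨ha, ht⟩, hl⟩
    · rw [Finset.sum_image, Finset.sum_sigma]
      · refine (one_step α B K q d Qmin hnn hsum h0 h1 hmin hd hK hν (R [])).trans ?_
        refine Finset.sum_le_sum fun a ha => ?_
        simp only [wordP_cons]
        rw [← Finset.mul_sum]
        refine mul_le_mul_of_nonneg_left (hF a (Finset.mem_filter.1 ha).2).2 ?_
        have := hnn a.1 a.2
        split_ifs <;> simp [this]
      · rintro ⟨a, t⟩ _ ⟨b, u⟩ _ h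
        obtain ⟨rfl, rfl⟩ := List.cons.inj h
        rfl

/-- Admissible letters have positive coverage. -/
lemma coverage_pos (α : ℝ) (B K : (j : Fin N) → Fin (r j) → ℕ)
    (hB : ∀ j i, 1 ≤ B j i)
    (q : (j : Fin N) → Fin (r j) → ℝ) (d : (j : Fin N) → Fin (r j))
    (hnn : ∀ j i, 0 ≤ q j i)
    (hle : ∀ j, ∑ i, q j i * (B j i : ℝ) ≤ α * ∑ i, q j i * (K j i : ℝ))
    (hdN : ∀ j, inN α B K q j → (B j (d j) : ℝ) < α * (K j (d j) : ℝ))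
    (a : X N r) (ha : Allowed α B K q d a) : 1 ≤ K a.1 a.2 := by
  obtain ⟨j, i⟩ := a
  obtain ⟨hpos, hdi⟩ := ha
  dsimp only at hpos hdi ⊢
  by_contra hK
  have hK0 : K j i = 0 := by omega
  have hBi : (1 : ℝ) ≤ B j i := by exact_mod_cast hB j i
  by_cases hj : inN α B K q j
  · have h := hdN j hj
    rw [← hdi hj, hK0] at h
    simp only [Nat.cast_zero, mul_zero] at h
    linarith
    -- A zero-coverage letter of the support would make the constraint `q̄·b̄ ≤ α(q̄·k̄)` fail.
  · have hlt : ∑ i, q j i * (α * (K j i : ℝ)) < ∑ i, q j i * (B j i : ℝ) := by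
      refine Finset.sum_lt_sum (fun i' _ => ?_) ⟨i, Finset.mem_univ _, ?_⟩
      · rcases (hnn j i').eq_or_lt with h | h
        · simp [← h]
        · exact mul_le_mul_of_nonneg_left (not_lt.1 fun h' => hj ⟨i', h, h'⟩) h.le
      · rw [hK0]
        simp only [Nat.cast_zero, mul_zero]
        exact mul_pos hpos (by linarith)
    have h := hle j
    rw [Finset.mul_sum] at h
    refine absurd (h.trans_eq (Finset.sum_congr rfl fun i _ => ?_)) (not_le.2 hlt)
    ring

end RB

/-- Lemma 15, `m_lower_bound`.  `q j` is the minimizer attaining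
the `α`-branching number `M_j` (so `Q` is their concatenation), `Q_min` is the
least positive entry of `Q`, and `d j ∈ 𝒳_j` is an index with `Q_{d_j} > 0`,
chosen with `α·K_{d_j} > B_{d_j}` whenever `j ∈ 𝒩`.  Then for every
`ν, k ∈ ℤ` and every rules mapping `R`:
`Σ_{ā ∈ M^{ν,k}} P_{R,Q}(ā) ≥ Q_min^{max(ν,0)}`. -/
theorem stmt_16
    (N : ℕ) (hN : 1 ≤ N) (r : Fin N → ℕ) (hr : ∀ j, 1 ≤ r j)
    (bb kb : (j : Fin N) → Fin (r j) → ℕ)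
    (hbb : ∀ j i, 1 ≤ bb j i)
    (γ : (j : Fin N) → Fin (r j) → ℝ)
    (hγpos : ∀ j i, 0 < γ j i) (hγsum : ∀ j, ∑ i, γ j i = 1)
    (α : ℝ) (hα : 0 < α)
    (hfeas : ∀ j, (RB.BrSet α (bb j) (kb j) (γ j)).Nonempty)
    (q : (j : Fin N) → Fin (r j) → ℝ)
    (hq : ∀ j, (∀ i, 0 ≤ q j i) ∧ (∑ i, q j i = 1) ∧
      (∑ i, q j i * (bb j i : ℝ)) ≤ α * (∑ i, q j i * (kb j i : ℝ)) ∧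
      RB.KL (q j) (γ j) / (∑ i, q j i * (kb j i : ℝ)) =
        sInf (RB.BrSet α (bb j) (kb j) (γ j)))
    (Qmin : ℝ)
    (hQmin : IsLeast {x | ∃ a : RB.X N r, 0 < q a.1 a.2 ∧ x = q a.1 a.2} Qmin)
    (d : (j : Fin N) → Fin (r j))
    (hd : ∀ j, 0 < q j (d j))
    (hdN : ∀ j, RB.inN α bb kb q j → (bb j (d j) : ℝ) < α * (kb j (d j) : ℝ)) :
    ∀ (ν k : ℤ) (R : List (RB.X N r) → Fin N),
      Qmin ^ ν.toNat ≤ ∑' l : RB.MSet α bb kb q d ν k, RB.wordP R q l.1 := by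
  intro ν k R
  have hnn : ∀ j i, 0 ≤ q j i := fun j => (hq j).1
  have hsum : ∀ j, ∑ i, q j i = 1 := fun j => (hq j).2.1
  obtain ⟨⟨a, ha, hQa⟩, hlow⟩ := hQmin
  have h0 : 0 < Qmin := hQa ▸ ha
  have h1 : Qmin ≤ 1 := by
    rw [hQa, ← hsum a.1]
    exact Finset.single_le_sum (fun i _ => hnn a.1 i) (Finset.mem_univ a.2)
  have hmin : ∀ j i, 0 < q j i → Qmin ≤ q j i := fun j i h => hlow ⟨⟨j, i⟩, h, rfl⟩
  obtain ⟨F, hF, hle⟩ := RB.exists_finset α bb kb q d Qmin hnn hsum h0 h1 hmin hd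
    (RB.coverage_pos α bb kb hbb q d hnn (fun j => (hq j).2.2.1) hdN) k.toNat ν k R
    (Int.self_le_toNat k)
  rw [← hF]
  exact hle.trans_eq (Finset.tsum_subtype F (RB.wordP R q)).symm
end
end

section
/- The set C₁ contains 1, so c₁ := inf C₁ is well defined and C₁ = [c₁, 1]. The function f₁ is monotonically non-increasing on (0,1); moreover, f₁(γ) = 0 for every γ ∈ (0,1) with γ ≥ c₁, and f₁(γ) = D(c₁‖γ) / (c₁·b₁ + (1−c₁)·s₂) for every γ ∈ (0,1) with γ < c₁. -/
/-!
Everything follows from four facts about `klBin x y = D(x‖y)`: it is nonnegative, it vanishes at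
`x = y`, it is convex in `x`, and it decreases in `y` on `(0, x]`.

The set `C₁` is closed and convex and has maximum `1`, so it is `[c₁, 1]`. For `c₁ ≤ γ` the point
`q = γ` is admissible and gives the value `0`. For `γ < c₁ ≤ q`, convexity together with
`D(γ‖γ) = 0` shows that `D(q‖γ) / (q - γ)` is nondecreasing in `q`, while `(q - γ) / L(q)` is
nondecreasing because the affine function `L(q) = q b₁ + (1 - q) s₂` is nonnegative at `γ`. The
product of the two is the objective, which is therefore minimal at `q = c₁`. Monotonicity of `f₁`
then reduces to that of `γ ↦ D(c₁‖γ)` on `(0, c₁)`.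
-/

open scoped Classical

noncomputable section

/-- The binary Kullback–Leibler divergence `D(x‖y)`, with natural logarithms. The convention
`0 log 0 = 0` is automatic for `x ∈ {0, 1}`, since the logarithm is multiplied by `0`. -/
def klBin (x y : ℝ) : ℝ :=
  x * Real.log (x / y) + (1 - x) * Real.log ((1 - x) / (1 - y))

/-- The divergence as negative binary entropy plus a term affine in `x`. -/
lemma klBin_eq (x y : ℝ) (hy : y ∈ Set.Ioo (0 : ℝ) 1) :
    klBin x y = -Real.binEntropy x - x * Real.log y - (1 - x) * Real.log (1 - y) := by
  have key : ∀ a b : ℝ, b ≠ 0 → a * Real.log (a / b) = a * Real.log a - a * Real.log b := by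
    intro a b hb
    rcases eq_or_ne a 0 with rfl | ha
    · simp
    · rw [Real.log_div ha hb]; ring
  rw [klBin, key x y hy.1.ne', key (1 - x) (1 - y) (by linarith [hy.2]), Real.binEntropy,
    Real.log_inv, Real.log_inv]
  ring

lemma klBin_self (y : ℝ) (hy : y ∈ Set.Ioo (0 : ℝ) 1) : klBin y y = 0 := by
  have h1 : (1 - y) ≠ 0 := by linarith [hy.2]
  simp [klBin, div_self hy.1.ne', div_self h1]

lemma klBin_nonneg (x y : ℝ) (hx : x ∈ Set.Icc (0 : ℝ) 1) (hy : y ∈ Set.Ioo (0 : ℝ) 1) :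
    0 ≤ klBin x y := by
  have key : ∀ a b : ℝ, 0 ≤ a → 0 < b → a - b ≤ a * Real.log (a / b) := by
    intro a b ha hb
    rcases ha.eq_or_lt with rfl | ha
    · simp [hb.le]
    · have h := Real.one_sub_inv_le_log_of_pos (div_pos ha hb)
      have h2 := mul_le_mul_of_nonneg_left h ha.le
      have h3 : a * (1 - (a / b)⁻¹) = a - b := by field_simp
      linarith
  have h1 := key x y hx.1 hy.1
  have h2 := key (1 - x) (1 - y) (by linarith [hx.2]) (by linarith [hy.2])
  unfold klBin
  linarith

lemma klBin_convexOn (y : ℝ) (hy : y ∈ Set.Ioo (0 : ℝ) 1) :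
    ConvexOn ℝ (Set.Icc 0 1) (fun x => klBin x y) := by
  refine ⟨convex_Icc 0 1, fun u hu v hv a b ha hb hab => ?_⟩
  have h := Real.strictConcave_binEntropy.concaveOn.2 hu hv ha hb hab
  simp only [smul_eq_mul, klBin_eq _ _ hy] at h ⊢
  obtain rfl : b = 1 - a := by linarith
  nlinarith

/-- The secant slopes of `D(·‖y)` from its zero `y` are nondecreasing, without denominators. -/
lemma klBin_slope (y c q : ℝ) (hy : y ∈ Set.Ioo (0 : ℝ) 1) (hyc : y < c) (hcq : c ≤ q)
    (hq : q ≤ 1) : (q - y) * klBin c y ≤ (c - y) * klBin q y := by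
  have hqy : 0 < q - y := by linarith
  have h := (klBin_convexOn y hy).2 (show y ∈ Set.Icc (0 : ℝ) 1 from ⟨hy.1.le, hy.2.le⟩)
    (show q ∈ Set.Icc (0 : ℝ) 1 from ⟨by linarith [hy.1], hq⟩)
    (show 0 ≤ (q - c) / (q - y) from div_nonneg (by linarith) hqy.le)
    (show 0 ≤ (c - y) / (q - y) from div_nonneg (by linarith) hqy.le) (by field_simp; ring)
  have hc : (q - c) / (q - y) * y + (c - y) / (q - y) * q = c := by field_simp; ring
  simp only [smul_eq_mul, hc, klBin_self y hy, mul_zero, zero_add] at h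
  rw [div_mul_eq_mul_div, le_div_iff₀ hqy] at h
  linarith

/-- For `y ≤ y' ≤ c`, the difference `D(c‖y) - D(c‖y')` is affine and nondecreasing in `c`, and
equals `D(y'‖y) ≥ 0` at `c = y'`. -/
lemma klBin_anti (y y' c : ℝ) (hy : y ∈ Set.Ioo (0 : ℝ) 1) (hy' : y' ∈ Set.Ioo (0 : ℝ) 1)
    (h : y ≤ y') (hc : y' ≤ c) : klBin c y' ≤ klBin c y := by
  have h0 := klBin_nonneg y' y ⟨hy'.1.le, hy'.2.le⟩ hy
  have h1 := klBin_self y' hy'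
  have h2 := Real.log_le_log hy.1 h
  have h3 := Real.log_le_log (x := 1 - y') (y := 1 - y) (by linarith [hy'.2]) (by linarith)
  rw [klBin_eq _ _ hy] at h0 ⊢
  rw [klBin_eq _ _ hy'] at h1 ⊢
  nlinarith [mul_nonneg (sub_nonneg.2 hc) (sub_nonneg.2 h2),
    mul_nonneg (sub_nonneg.2 hc) (sub_nonneg.2 h3)]

/-- analysis of a simple branching rule, Section 5.2.
For a simple rule (`α > 1`, integers `b₁, b₂ ≥ 1`, `s₁ < b₁`, `s₂ < b₂`), with
`D(x‖y)` the binary Kullback-Leibler divergence,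
`C₁ = { q ∈ [0,1] : α(q·b₁+(1-q)·s₂) ≥ q·b₁+(1-q)·b₂ }`, `c₁ = inf C₁`, and
`f₁(γ) = min_{q∈C₁} D(q‖γ)/(q·b₁+(1-q)·s₂)`:  `1 ∈ C₁` (so `c₁` is well defined),
`C₁ = [c₁,1]`, `f₁` is monotonically non-increasing on `(0,1)`, `f₁(γ) = 0` for
`γ ∈ (0,1)` with `γ ≥ c₁`, and `f₁(γ) = D(c₁‖γ)/(c₁·b₁+(1-c₁)·s₂)` for
`γ ∈ (0,1)` with `γ < c₁`. -/
theorem stmt_19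
    (α : ℝ) (hα : 1 < α)
    (b₁ b₂ s₁ s₂ : ℕ) (hb₁ : 1 ≤ b₁) (hb₂ : 1 ≤ b₂)
    (hs₁ : s₁ < b₁) (hs₂ : s₂ < b₂)
    (D : ℝ → ℝ → ℝ)
    (hD : ∀ x y, D x y =
      x * Real.log (x / y) + (1 - x) * Real.log ((1 - x) / (1 - y)))
    (C₁ : Set ℝ)
    (hC₁ : C₁ = {qq : ℝ | qq ∈ Set.Icc (0 : ℝ) 1 ∧
      qq * (b₁ : ℝ) + (1 - qq) * (b₂ : ℝ) ≤
        α * (qq * (b₁ : ℝ) + (1 - qq) * (s₂ : ℝ))})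
    (c₁ : ℝ) (hc₁ : c₁ = sInf C₁)
    (f₁ : ℝ → ℝ)
    (hf₁ : ∀ γ : ℝ, f₁ γ =
      sInf {x : ℝ | ∃ qq ∈ C₁,
        x = D qq γ / (qq * (b₁ : ℝ) + (1 - qq) * (s₂ : ℝ))}) :
    (1 : ℝ) ∈ C₁ ∧
    C₁ = Set.Icc c₁ 1 ∧
    AntitoneOn f₁ (Set.Ioo (0 : ℝ) 1) ∧
    (∀ γ ∈ Set.Ioo (0 : ℝ) 1, c₁ ≤ γ → f₁ γ = 0) ∧
    (∀ γ ∈ Set.Ioo (0 : ℝ) 1, γ < c₁ →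
      f₁ γ = D c₁ γ / (c₁ * (b₁ : ℝ) + (1 - c₁) * (s₂ : ℝ))) := by
  obtain rfl : D = klBin := by
    funext x y
    exact hD x y
  have hb₁' : (1 : ℝ) ≤ b₁ := by exact_mod_cast hb₁
  have hb₂' : (1 : ℝ) ≤ b₂ := by exact_mod_cast hb₂
  have hs₂' : (0 : ℝ) ≤ s₂ := Nat.cast_nonneg _
  have h1 : (1 : ℝ) ∈ C₁ := by
    rw [hC₁]
    refine ⟨by simp, ?_⟩
    nlinarith
  have hIcc : ∀ q ∈ C₁, q ∈ Set.Icc (0 : ℝ) 1 := by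
    intro q hq
    rw [hC₁] at hq
    exact hq.1
  have hbdd : BddBelow C₁ := ⟨0, fun q hq => (hIcc q hq).1⟩
  have hclosed : IsClosed C₁ := by
    rw [hC₁]
    have hle : IsClosed {q : ℝ | q * (b₁ : ℝ) + (1 - q) * (b₂ : ℝ) ≤
        α * (q * (b₁ : ℝ) + (1 - q) * (s₂ : ℝ))} :=
      isClosed_le (by fun_prop) (by fun_prop)
    exact isClosed_Icc.inter hle
  have hcmem : c₁ ∈ C₁ := hc₁ ▸ hclosed.csInf_mem ⟨1, h1⟩ hbdd
  have hconv : Convex ℝ C₁ := by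
    intro u hu v hv a b ha hb hab
    rw [hC₁] at hu hv ⊢
    refine ⟨convex_Icc (0 : ℝ) 1 hu.1 hv.1 ha hb hab, ?_⟩
    have hu2 := mul_le_mul_of_nonneg_left hu.2 ha
    have hv2 := mul_le_mul_of_nonneg_left hv.2 hb
    obtain rfl : b = 1 - a := by linarith
    simp only [smul_eq_mul]
    linarith
  have hC : C₁ = Set.Icc c₁ 1 := by
    apply Set.Subset.antisymm
    · intro q hq
      exact ⟨hc₁ ▸ csInf_le hbdd hq, (hIcc q hq).2⟩
    · exact hconv.ordConnected.out hcmem h1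
  have hL : ∀ q ∈ C₁, 0 < q * (b₁ : ℝ) + (1 - q) * (s₂ : ℝ) := by
    intro q hq
    rw [hC₁] at hq
    obtain ⟨⟨hq0, hq1⟩, hq2⟩ := hq
    have : 0 < q * (b₁ : ℝ) + (1 - q) * (b₂ : ℝ) := by nlinarith
    exact pos_of_mul_pos_right (this.trans_le hq2) (by linarith)
  have hnn : ∀ γ ∈ Set.Ioo (0 : ℝ) 1, ∀ q ∈ C₁,
      0 ≤ klBin q γ / (q * (b₁ : ℝ) + (1 - q) * (s₂ : ℝ)) := fun γ hγ q hq =>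
    div_nonneg (klBin_nonneg q γ (hIcc q hq) hγ) (hL q hq).le
  have hmin : ∀ γ, ∀ p ∈ C₁, (∀ q ∈ C₁, klBin p γ / (p * (b₁ : ℝ) + (1 - p) * (s₂ : ℝ)) ≤
      klBin q γ / (q * (b₁ : ℝ) + (1 - q) * (s₂ : ℝ))) →
      f₁ γ = klBin p γ / (p * (b₁ : ℝ) + (1 - p) * (s₂ : ℝ)) := by
    intro γ p hp h
    rw [hf₁]
    apply IsLeast.csInf_eq
    refine ⟨⟨p, hp, rfl⟩, ?_⟩
    rintro _ ⟨q, hq, rfl⟩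
    exact h q hq
  have hzero : ∀ γ ∈ Set.Ioo (0 : ℝ) 1, c₁ ≤ γ → f₁ γ = 0 := by
    intro γ hγ hc
    rw [hmin γ γ (hC ▸ ⟨hc, hγ.2.le⟩) ?_]
    · simp [klBin_self γ hγ]
    · intro q hq
      rw [klBin_self γ hγ, zero_div]
      exact hnn γ hγ q hq
  have hval : ∀ γ ∈ Set.Ioo (0 : ℝ) 1, γ < c₁ →
      f₁ γ = klBin c₁ γ / (c₁ * (b₁ : ℝ) + (1 - c₁) * (s₂ : ℝ)) := by
    intro γ hγ hc
    refine hmin γ c₁ hcmem fun q hq => ?_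
    rw [div_le_div_iff₀ (hL _ hcmem) (hL _ hq)]
    have hq' : q ∈ Set.Icc c₁ 1 := hC ▸ hq
    have hs := klBin_slope γ c₁ q hγ hc hq'.1 hq'.2
    have hLγ : 0 ≤ γ * (b₁ : ℝ) + (1 - γ) * (s₂ : ℝ) := by
      have := hγ.1
      have := hγ.2
      have : 0 ≤ 1 - γ := by linarith
      positivity
    have hlin : (c₁ - γ) * (q * (b₁ : ℝ) + (1 - q) * (s₂ : ℝ)) ≤
        (q - γ) * (c₁ * (b₁ : ℝ) + (1 - c₁) * (s₂ : ℝ)) := by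
      nlinarith [mul_nonneg (sub_nonneg.2 hq'.1) hLγ]
    -- Multiply the two monotonicity inequalities together and cancel `q - γ > 0`.
    refine le_of_mul_le_mul_left ?_ (by linarith [hq'.1] : 0 < q - γ)
    have e1 := mul_le_mul_of_nonneg_right hs (hL _ hq).le
    have e2 := mul_le_mul_of_nonneg_right hlin (klBin_nonneg q γ (hIcc q hq) hγ)
    linarith
  refine ⟨h1, hC, ?_, hzero, hval⟩
  intro γ hγ γ' hγ' hle
  rcases le_or_gt c₁ γ' with hc | hc
  · rw [hzero γ' hγ' hc, hf₁]
    apply Real.sInf_nonneg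
    rintro _ ⟨q, hq, rfl⟩
    exact hnn γ hγ q hq
  · rw [hval γ' hγ' hc, hval γ hγ (hle.trans_lt hc)]
    exact div_le_div_of_nonneg_right (klBin_anti γ γ' c₁ hγ hγ' hle hc.le) (hL _ hcmem).le
end
end
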